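/- Suppose the primitive set ℬ ⊆ ℕ is taut. Then for each finite set A of primes and each ε > 0 there is a finite set P of primes with P ∩ A = ∅ and δ(M_{ℬ ∖ (ℬ_A ∪ M_P)}) < ε, where ℬ_A := {b ∈ ℬ : every prime factor of b lies in A}. -/

import Mathlib

open Filter Set Topology MeasureTheory

open scoped Classical

noncomputable section

/-- The set of multiples `M_B ⊆ ℤ` of a set `B ⊆ ℕ`. -/
def multiplesZ (B : Set ℕ) : Set ℤ := {n : ℤ | ∃ b ∈ B, (b : ℤ) ∣ n}

/-- The `B`-free integers `F_B = ℤ ∖ M_B`. -/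
def freeZ (B : Set ℕ) : Set ℤ := (multiplesZ B)ᶜ

/-- The logarithmically weighted averages `(1/log n) ∑_{k=1}^n 1_A(k)/k`. -/
def logWeight (A : Set ℤ) (n : ℕ) : ℝ :=
  (Real.log n)⁻¹ * ∑ k ∈ Finset.Icc 1 n, A.indicator (fun m : ℤ => ((m : ℝ))⁻¹) (k : ℤ)

/-- The lower logarithmic density of a set `A ⊆ ℤ`. -/
def logDensLow (A : Set ℤ) : ℝ := liminf (logWeight A) atTop

/-- `A ⊆ ℤ` has logarithmic density `d`. -/
def HasLogDensity (A : Set ℤ) (d : ℝ) : Prop := Tendsto (logWeight A) atTop (𝓝 d)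

/-- `B` is primitive: no element divides another one. -/
def Primitive (B : Set ℕ) : Prop := ∀ b ∈ B, ∀ b' ∈ B, b ∣ b' → b = b'

/-- `B` is Behrend: its set of multiples has logarithmic density one. -/
def IsBehrend (B : Set ℕ) : Prop := logDensLow (multiplesZ B) = 1

/-- `B` is taut: removing any element strictly decreases the logarithmic density
of the set of multiples. -/
def IsTaut (B : Set ℕ) : Prop :=
  ∀ b ∈ B, logDensLow (multiplesZ (B \ {b})) < logDensLow (multiplesZ B)

/-- `B̃^(N)`: the elements of `B` having no prime factor `≤ N`. -/
def Btilde (B : Set ℕ) (N : ℕ) : Set ℕ := {b ∈ B | ∀ p : ℕ, p.Prime → p ∣ b → N < p}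

/-- `B^(N)`: the elements of `B` all of whose prime factors are `≤ N`. -/
def Bsmooth (B : Set ℕ) (N : ℕ) : Set ℕ := {b ∈ B | ∀ p : ℕ, p.Prime → p ∣ b → p ≤ N}

/-- The set of multiples of `P`, as a subset of `ℕ`. -/
def natMultiples (P : Set ℕ) : Set ℕ := {n : ℕ | ∃ p ∈ P, p ∣ n}

/-- The Dirichlet weight `k ^ (-s)`. -/
def ww (s : ℝ) (k : ℕ) : ENNReal := ENNReal.ofReal ((k : ℝ) ^ (-s))

/-- The Dirichlet series of a set. -/
def ZZ (S : Set ℕ) (s : ℝ) : ENNReal := ∑' k, S.indicator (ww s) k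

lemma ww_zero {s : ℝ} (hs : 1 < s) : ww s 0 = 0 := by
  have : -s ≠ 0 := by linarith
  simp [ww, Real.zero_rpow this]

lemma ww_mul (s : ℝ) (a b : ℕ) : ww s (a * b) = ww s a * ww s b := by
  unfold ww
  rw [← ENNReal.ofReal_mul (by positivity)]
  congr 1
  push_cast
  rw [Real.mul_rpow (by positivity) (by positivity)]

lemma ww_anti {s : ℝ} (hs : 1 < s) {a b : ℕ} (ha : 0 < a) (hab : a ≤ b) : ww s b ≤ ww s a := by
  unfold ww
  apply ENNReal.ofReal_le_ofReal
  apply Real.rpow_le_rpow_of_nonpos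
  · exact_mod_cast ha
  · exact_mod_cast hab
  · linarith

lemma ww_one (s : ℝ) : ww s 1 = 1 := by simp [ww]

lemma ww_le_inv {s : ℝ} (hs : 1 < s) (a : ℕ) : ww s a ≤ (a : ENNReal)⁻¹ := by
  rcases Nat.eq_zero_or_pos a with rfl | ha
  · simp
  unfold ww
  rw [← ENNReal.ofReal_natCast, ← ENNReal.ofReal_inv_of_pos (by exact_mod_cast ha)]
  apply ENNReal.ofReal_le_ofReal
  rw [← Real.rpow_neg_one]
  apply Real.rpow_le_rpow_of_exponent_le
  · exact_mod_cast ha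
  · linarith

lemma ZZ_mono {S T : Set ℕ} (h : S ⊆ T) (s : ℝ) : ZZ S s ≤ ZZ T s := by
  apply ENNReal.tsum_le_tsum
  intro k
  exact Set.indicator_le_indicator_of_subset h (fun _ => zero_le) k

lemma ZZ_scale (a : ℕ) (ha : 0 < a) (S : Set ℕ) (s : ℝ) :
    ZZ (Set.image (fun j => a * j) S) s = ww s a * ZZ S s := by
  unfold ZZ
  have hinj : Function.Injective (fun j : ℕ => a * j) := fun x y h =>
    Nat.eq_of_mul_eq_mul_left ha h
  rw [← ENNReal.tsum_mul_left]
  rw [← hinj.tsum_eq (f := (Set.image (fun j => a * j) S).indicator (ww s))]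
  · congr 1
    ext j
    by_cases hj : j ∈ S
    · rw [Set.indicator_of_mem (Set.mem_image_of_mem _ hj), Set.indicator_of_mem hj, ww_mul]
    · rw [Set.indicator_of_notMem, Set.indicator_of_notMem hj, mul_zero]
      rw [hinj.mem_set_image]; exact hj
  · intro k hk
    have := Set.mem_of_indicator_ne_zero hk
    obtain ⟨j, _, rfl⟩ := this
    exact ⟨j, rfl⟩

lemma ZZ_iUnion {ι : Type*} (S : ι → Set ℕ) (s : ℝ) : ZZ (⋃ i, S i) s ≤ ∑' i, ZZ (S i) s := by
  unfold ZZ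
  rw [ENNReal.tsum_comm]
  apply ENNReal.tsum_le_tsum
  intro k
  by_cases hk : k ∈ ⋃ i, S i
  · obtain ⟨i, hi⟩ := Set.mem_iUnion.1 hk
    rw [Set.indicator_of_mem hk, ← Set.indicator_of_mem hi (ww s)]
    exact ENNReal.le_tsum i
  · rw [Set.indicator_of_notMem hk]; exact zero_le

lemma summable_ww {s : ℝ} (hs : 1 < s) : Summable (fun k : ℕ => (k : ℝ) ^ (-s)) := by
  rw [Real.summable_nat_rpow]; linarith

lemma ZZ_univ_eq {s : ℝ} (hs : 1 < s) :
    ZZ univ s = ENNReal.ofReal (∑' k : ℕ, (k : ℝ) ^ (-s)) := by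
  unfold ZZ
  rw [ENNReal.ofReal_tsum_of_nonneg (fun n => by positivity) (summable_ww hs)]
  simp [ww]

lemma ZZ_univ_ne_top {s : ℝ} (hs : 1 < s) : ZZ univ s ≠ ⊤ := by
  rw [ZZ_univ_eq hs]; exact ENNReal.ofReal_ne_top

lemma ZZ_univ_ge_one (s : ℝ) : 1 ≤ ZZ univ s := by
  unfold ZZ
  calc (1 : ENNReal) = Set.univ.indicator (ww s) 1 := by simp [ww_one]
    _ ≤ _ := ENNReal.le_tsum 1

lemma zeta_lim : Tendsto (fun s : ℝ => (s - 1) * ∑' k : ℕ, (k : ℝ) ^ (-s)) (𝓝[>] 1) (𝓝 1) := by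
  have := tendsto_sub_mul_tsum_nat_rpow
  refine this.congr' ?_
  filter_upwards with s
  congr 2
  ext n
  rw [Real.rpow_neg (by positivity)]
  simp

lemma zeta_upper : ∀ᶠ s : ℝ in 𝓝[>] 1, ZZ univ s ≤ ENNReal.ofReal (2 / (s - 1)) := by
  filter_upwards [zeta_lim.eventually (gt_mem_nhds (show (1 : ℝ) < 2 by norm_num)),
    self_mem_nhdsWithin] with s hs h1
  have h1' : 1 < s := h1
  rw [ZZ_univ_eq h1']
  apply ENNReal.ofReal_le_ofReal
  rw [le_div_iff₀ (by linarith)]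
  linarith

lemma zeta_top : ∀ K : ℝ, ∀ᶠ s : ℝ in 𝓝[>] 1, ENNReal.ofReal K ≤ ZZ univ s := by
  intro K
  have h2 : ∀ᶠ s : ℝ in 𝓝[>] 1, (s - 1) * (|K| + 1) < 1 / 2 := by
    have : Tendsto (fun s : ℝ => (s - 1) * (|K| + 1)) (𝓝[>] 1) (𝓝 ((1 - 1) * (|K| + 1))) := by
      apply Tendsto.mono_left _ nhdsWithin_le_nhds
      apply Continuous.tendsto
      fun_prop
    apply this.eventually (gt_mem_nhds _)
    norm_num
  filter_upwards [zeta_lim.eventually (lt_mem_nhds (show (1 / 2 : ℝ) < 1 by norm_num)),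
    self_mem_nhdsWithin, h2] with s hs h1 h2
  have h1' : 1 < s := h1
  rw [ZZ_univ_eq h1']
  apply ENNReal.ofReal_le_ofReal
  have : (s - 1) * (|K| + 1) < (s - 1) * ∑' k : ℕ, (k : ℝ) ^ (-s) := by linarith
  have := lt_of_mul_lt_mul_left this (by linarith)
  linarith [le_abs_self K]

/-- Jordan totient of real exponent. -/
lemma jordan_exists (α : ℝ) (hα : 0 < α) : ∃ J : ℕ → ℝ, (∀ n : ℕ, 0 ≤ J n) ∧
    ∀ n : ℕ, 0 < n → ∑ d ∈ n.divisors, J d = (n : ℝ) ^ α := by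
  let pw : ArithmeticFunction ℝ := ⟨fun n => (n : ℝ) ^ α, by simp [Real.zero_rpow hα.ne']⟩
  have hpw : ∀ n, pw n = (n : ℝ) ^ α := fun n => rfl
  let J : ArithmeticFunction ℝ := (ArithmeticFunction.moebius : ArithmeticFunction ℝ) * pw
  have hpm : pw.IsMultiplicative := by
    refine ⟨by simp [hpw], ?_⟩
    intro m n _
    simp only [hpw]
    push_cast
    rw [Real.mul_rpow (by positivity) (by positivity)]
  have hJm : J.IsMultiplicative :=
    (ArithmeticFunction.isMultiplicative_moebius.intCast).mul hpm
  have hJz : J * (ArithmeticFunction.zeta : ArithmeticFunction ℝ) = pw := by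
    simp only [J]
    rw [mul_comm, ← mul_assoc, ArithmeticFunction.coe_zeta_mul_coe_moebius, one_mul]
  have hsum : ∀ n : ℕ, ∑ d ∈ n.divisors, J d = (n : ℝ) ^ α := by
    intro n
    rw [← ArithmeticFunction.coe_mul_zeta_apply, hJz, hpw]
  refine ⟨J, ?_, fun n _ => hsum n⟩
  intro n
  rcases Nat.eq_zero_or_pos n with rfl | hn
  · simp
  rw [ArithmeticFunction.IsMultiplicative.multiplicative_factorization J hJm hn.ne']
  apply Finset.prod_nonneg
  intro p hp
  have pp : p.Prime := Nat.prime_of_mem_primeFactors (by simpa using hp)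
  show 0 ≤ J (p ^ _)
  generalize n.factorization p = k
  cases k with
  | zero => simp [hJm.1]
  | succ k =>
    have h1 := hsum (p ^ (k + 1))
    have h2 := hsum (p ^ k)
    rw [Nat.sum_divisors_prime_pow pp] at h1 h2
    rw [Finset.sum_range_succ, h2] at h1
    have : ((p ^ k : ℕ) : ℝ) ^ α ≤ ((p ^ (k + 1) : ℕ) : ℝ) ^ α := by
      apply Real.rpow_le_rpow (by positivity) _ hα.le
      exact_mod_cast Nat.pow_le_pow_right pp.pos (Nat.le_succ k)
    linarith
lemma conv_exists {s t : ℝ} (ht : 1 < t) (hts : t < s) : ∃ g : ℕ → ENNReal, ∀ U : Set ℕ,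
    ZZ U t = ∑' d, ∑' e, if d * e ∈ U then g d * ww s e else 0 := by
  obtain ⟨J, hJ0, hJ⟩ := jordan_exists (s - t) (by linarith)
  have hs : 1 < s := by linarith
  let g : ℕ → ENNReal := fun d => ENNReal.ofReal (J d) * ww s d
  have hg0 : g 0 = 0 := by simp [g, ww_zero hs]
  refine ⟨g, fun U => ?_⟩
  have hw : ∀ n : ℕ, ww t n = ∑' x : ℕ × ℕ, if x.1 * x.2 = n then g x.1 * ww s x.2 else 0 := by
    intro n
    rcases Nat.eq_zero_or_pos n with rfl | hn
    · rw [ww_zero ht]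
      symm
      rw [ENNReal.tsum_eq_zero]
      rintro ⟨d, e⟩
      split_ifs with h
      · rcases Nat.mul_eq_zero.1 h with h | h
        · simp only at h; subst h; simp [hg0]
        · simp only at h; subst h; simp [ww_zero hs]
      · rfl
    · rw [tsum_eq_sum (s := n.divisorsAntidiagonal)]
      · have h1 : ∀ x ∈ n.divisorsAntidiagonal,
            (if x.1 * x.2 = n then g x.1 * ww s x.2 else 0) = ENNReal.ofReal (J x.1) * ww s n := by
          intro x hx
          have := (Nat.mem_divisorsAntidiagonal.1 hx).1
          rw [if_pos this, ← this, ww_mul]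
          simp only [g]
          ring
        rw [Finset.sum_congr rfl h1, ← Finset.sum_mul,
          Nat.sum_divisorsAntidiagonal (fun d _ => ENNReal.ofReal (J d)),
          ← ENNReal.ofReal_sum_of_nonneg (fun i _ => hJ0 i), hJ n hn, ww, ww,
          ← ENNReal.ofReal_mul (by positivity), ← Real.rpow_add (by exact_mod_cast hn)]
        congr 2
        ring
      · intro x hx
        rw [if_neg]
        intro h
        exact hx (Nat.mem_divisorsAntidiagonal.2 ⟨h, hn.ne'⟩)
  rw [← ENNReal.tsum_prod (f := fun d e => if d * e ∈ U then g d * ww s e else 0)]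
  unfold ZZ
  have h2 : ∀ n, U.indicator (ww t) n = ∑' x : ℕ × ℕ,
      if n = x.1 * x.2 then (if x.1 * x.2 ∈ U then g x.1 * ww s x.2 else 0) else 0 := by
    intro n
    by_cases hn : n ∈ U
    · rw [Set.indicator_of_mem hn, hw]
      congr 1
      ext x
      by_cases h : x.1 * x.2 = n
      · rw [if_pos h, if_pos h.symm, if_pos (h ▸ hn)]
      · rw [if_neg h, if_neg (fun h' => h h'.symm)]
    · rw [Set.indicator_of_notMem hn]
      symm
      rw [ENNReal.tsum_eq_zero]
      intro x
      split_ifs with h h'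
      · exact absurd (h ▸ h') hn
      · rfl
      · rfl
  simp_rw [h2]
  rw [ENNReal.tsum_comm]
  congr 1
  ext x
  rw [tsum_ite_eq]

lemma upset_ineq {s t : ℝ} (ht : 1 < t) (hts : t < s) (C : Set ℕ) :
    ZZ (natMultiples C) s * ZZ univ t ≤ ZZ (natMultiples C) t * ZZ univ s := by
  obtain ⟨g, hg⟩ := conv_exists ht hts
  have h1 : ZZ univ t = (∑' d, g d) * ZZ univ s := by
    rw [hg, ← ENNReal.tsum_mul_right]
    congr 1
    ext d
    unfold ZZ
    rw [← ENNReal.tsum_mul_left]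
    simp
  have h2 : (∑' d, g d) * ZZ (natMultiples C) s ≤ ZZ (natMultiples C) t := by
    rw [hg, ← ENNReal.tsum_mul_right]
    apply ENNReal.tsum_le_tsum
    intro d
    unfold ZZ
    rw [← ENNReal.tsum_mul_left]
    apply ENNReal.tsum_le_tsum
    intro e
    by_cases he : e ∈ natMultiples C
    · rw [Set.indicator_of_mem he, if_pos]
      obtain ⟨p, hp, hpe⟩ := he
      exact ⟨p, hp, hpe.mul_left d⟩
    · rw [Set.indicator_of_notMem he]; simp
  rw [h1]
  calc _ = (∑' d, g d) * ZZ (natMultiples C) s * ZZ univ s := by ring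
    _ ≤ _ := mul_le_mul_left h2 _

/-- Periodic bound. -/
lemma periodic_bound (S : Set ℕ) (L : ℕ) (hL : 0 < L) (hper : ∀ k r, r ∈ S ↔ r + L * k ∈ S)
    {s : ℝ} (hs : 1 < s) :
    ZZ S s ≤ ((Finset.range L).filter (· ∈ S)).card * (1 + (L : ENNReal)⁻¹ * ZZ univ s) := by
  have : NeZero L := ⟨hL.ne'⟩
  unfold ZZ
  rw [← (Nat.divModEquiv L).symm.tsum_eq, ENNReal.tsum_prod', ENNReal.tsum_comm, tsum_fintype]
  have key : ∀ r : Fin L, ∑' j : ℕ, S.indicator (ww s) ((Nat.divModEquiv L).symm (j, r)) ≤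
      if (r : ℕ) ∈ S then (1 + (L : ENNReal)⁻¹ * ∑' k, univ.indicator (ww s) k) else 0 := by
    intro r
    have e : ∀ j, (Nat.divModEquiv L).symm (j, r) = r + L * j := by
      intro j
      simp [Nat.divModEquiv]
      ring
    split_ifs with hr
    · have h1 : ∀ j, S.indicator (ww s) ((Nat.divModEquiv L).symm (j, r)) ≤
          (if j = 0 then 1 else 0) + (L : ENNReal)⁻¹ * univ.indicator (ww s) j := by
        intro j
        rw [e, Set.indicator_of_mem ((hper j r).1 hr)]
        rcases Nat.eq_zero_or_pos j with rfl | hj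
        · simp only [mul_zero, add_zero, if_true]
          refine le_trans ?_ (le_add_right le_rfl)
          rcases Nat.eq_zero_or_pos (r : ℕ) with h0 | h0
          · rw [h0, ww_zero hs]; exact zero_le
          · rw [← ww_one s]; exact ww_anti hs Nat.one_pos h0
        · rw [if_neg hj.ne', zero_add, Set.indicator_of_mem (Set.mem_univ _)]
          calc ww s (r + L * j) ≤ ww s (L * j) := ww_anti hs (by positivity) (by omega)
            _ = ww s L * ww s j := ww_mul _ _ _
            _ ≤ _ := mul_le_mul_left (ww_le_inv hs L) _
      refine (ENNReal.tsum_le_tsum h1).trans ?_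
      rw [ENNReal.tsum_add, ENNReal.tsum_mul_left, tsum_ite_eq]
    · rw [nonpos_iff_eq_zero, ENNReal.tsum_eq_zero]
      intro j
      rw [e, Set.indicator_of_notMem]
      rwa [← hper j r]
  refine (Finset.sum_le_sum (fun r _ => key r)).trans ?_
  rw [Fin.sum_univ_eq_sum_range (fun r => if r ∈ S then (1 + (L : ENNReal)⁻¹ *
    ∑' k, univ.indicator (ww s) k) else 0), ← Finset.sum_filter, Finset.sum_const, nsmul_eq_mul]

lemma le_mul_of_asymp {x d Z K : ENNReal} (hK : K ≠ ⊤) (hZ : Z ≠ ⊤)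
    (h : ∃ᶠ t in 𝓝[>] (1 : ℝ), x * ZZ univ t ≤ (K + d * ZZ univ t) * Z) : x ≤ d * Z := by
  by_cases hd : d * Z = ⊤
  · rw [hd]; exact le_top
  apply ENNReal.le_of_forall_pos_le_add
  intro ε hε _
  have hKZ : K * Z ≠ ⊤ := ENNReal.mul_ne_top hK hZ
  have hT := zeta_top ((K * Z).toReal / ε)
  obtain ⟨t, ht, hT, ht1⟩ := (h.and_eventually (hT.and self_mem_nhdsWithin)).exists
  have ht1' : 1 < t := ht1
  have hfin := ZZ_univ_ne_top ht1'
  have hpos : ZZ univ t ≠ 0 := (lt_of_lt_of_le zero_lt_one (ZZ_univ_ge_one t)).ne'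
  have h3 : K * Z ≤ ε * ZZ univ t := by
    rw [← ENNReal.ofReal_toReal hKZ]
    have : (K * Z).toReal = ε * ((K * Z).toReal / ε) := by
      have : (ε : ℝ) ≠ 0 := by exact_mod_cast hε.ne'
      field_simp
    rw [this, ENNReal.ofReal_mul (by positivity), ENNReal.ofReal_coe_nnreal]
    exact mul_le_mul_right hT _
  have : x * ZZ univ t ≤ (d * Z + ε) * ZZ univ t := by
    calc _ ≤ _ := ht
      _ = K * Z + d * Z * ZZ univ t := by ring
      _ ≤ ε * ZZ univ t + d * Z * ZZ univ t := by gcongr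
      _ = _ := by ring
  exact (ENNReal.mul_le_mul_iff_left hpos hfin).1 this

/-- Density of the multiples of a finite set. -/
def pp (F : Finset ℕ) : ℕ := ∏ f ∈ F, f

def dd (F : Finset ℕ) : ENNReal :=
  ((Finset.range (pp F)).filter (· ∈ natMultiples (F : Set ℕ))).card * (pp F : ENNReal)⁻¹

def ff (F : Finset ℕ) : ENNReal :=
  ((Finset.range (pp F)).filter (· ∈ (natMultiples (F : Set ℕ))ᶜ)).card * (pp F : ENNReal)⁻¹

lemma pp_pos {F : Finset ℕ} (hF : ∀ f ∈ F, 0 < f) : 0 < pp F := Finset.prod_pos hF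

lemma per_mult (F : Finset ℕ) (k r : ℕ) :
    r ∈ natMultiples (F : Set ℕ) ↔ r + pp F * k ∈ natMultiples (F : Set ℕ) := by
  constructor
  · rintro ⟨f, hf, h⟩
    exact ⟨f, hf, dvd_add h ((Finset.dvd_prod_of_mem _ hf).mul_right k)⟩
  · rintro ⟨f, hf, h⟩
    exact ⟨f, hf, (Nat.dvd_add_left ((Finset.dvd_prod_of_mem (fun f : ℕ => f) hf).mul_right k)).1 h⟩

lemma dd_add_ff {F : Finset ℕ} (hF : ∀ f ∈ F, 0 < f) : dd F + ff F = 1 := by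
  unfold dd ff
  rw [← add_mul, ← Nat.cast_add]
  have := Finset.card_filter_add_card_filter_not (s := Finset.range (pp F))
    (· ∈ natMultiples (F : Set ℕ))
  simp only [Set.mem_compl_iff]
  rw [this, Finset.card_range]
  apply ENNReal.mul_inv_cancel
  · exact_mod_cast (pp_pos hF).ne'
  · simp

lemma ZZ_finite_le {F : Finset ℕ} (hF : ∀ f ∈ F, 0 < f) {s : ℝ} (hs : 1 < s) :
    ZZ (natMultiples F) s ≤ dd F * ZZ univ s := by
  let c : ENNReal := ((Finset.range (pp F)).filter (· ∈ natMultiples (F : Set ℕ))).card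
  apply le_mul_of_asymp (K := c) (ENNReal.natCast_ne_top _) (ZZ_univ_ne_top hs)
  apply Filter.Eventually.frequently
  have hlt : ∀ᶠ t in 𝓝[>] (1 : ℝ), t < s := nhdsWithin_le_nhds (gt_mem_nhds hs)
  filter_upwards [hlt, self_mem_nhdsWithin] with t hts ht
  have ht' : 1 < t := ht
  refine (upset_ineq ht' hts F).trans ?_
  gcongr
  refine (periodic_bound _ (pp F) (pp_pos hF) (per_mult F) ht').trans ?_
  unfold dd
  rw [mul_add, mul_one, mul_assoc]

/-- Sup over finite subsets. -/
def DD (C : Set ℕ) : ENNReal := ⨆ F : {F : Finset ℕ // (F : Set ℕ) ⊆ C}, dd F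

lemma ZZ_le_DD {C : Set ℕ} (hC : ∀ c ∈ C, 0 < c) {s : ℝ} (hs : 1 < s) :
    ZZ (natMultiples C) s ≤ DD C * ZZ univ s := by
  conv_lhs => unfold ZZ
  rw [ENNReal.tsum_eq_iSup_nat]
  apply iSup_le
  intro n
  let F : Finset ℕ := (Finset.range n).filter (· ∈ C)
  have hFC : (F : Set ℕ) ⊆ C := by intro f hf; simpa using (Finset.mem_filter.1 hf).2
  calc _ ≤ ∑ k ∈ Finset.range n, (natMultiples (F : Set ℕ)).indicator (ww s) k := by
        apply Finset.sum_le_sum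
        intro k hk
        rcases Nat.eq_zero_or_pos k with rfl | hk0
        · refine (Set.indicator_le_self _ _ _).trans ?_
          rw [ww_zero hs]; exact zero_le
        by_cases hkC : k ∈ natMultiples C
        · have : k ∈ natMultiples (F : Set ℕ) := by
            obtain ⟨c, hc, hck⟩ := hkC
            refine ⟨c, ?_, hck⟩
            have := Nat.le_of_dvd hk0 hck
            have := Finset.mem_range.1 hk
            simp only [F, Finset.coe_filter, Set.mem_ofPred_eq, Finset.mem_range]
            exact ⟨by omega, hc⟩
          rw [Set.indicator_of_mem hkC, Set.indicator_of_mem this]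
        · rw [Set.indicator_of_notMem hkC]; exact zero_le
    _ ≤ ZZ (natMultiples (F : Set ℕ)) s := ENNReal.sum_le_tsum _
    _ ≤ dd F * ZZ univ s := ZZ_finite_le (fun f hf => hC f (hFC hf)) hs
    _ ≤ _ := by
      gcongr
      exact le_iSup (fun F : {F : Finset ℕ // (F : Set ℕ) ⊆ C} => dd F) ⟨F, hFC⟩

lemma ff_union {F G : Finset ℕ} (hF : ∀ f ∈ F, 0 < f) (hG : ∀ f ∈ G, 0 < f)
    (hd : Disjoint F G) (hco : Nat.Coprime (pp F) (pp G)) : ff (F ∪ G) = ff F * ff G := by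
  have hpp : pp (F ∪ G) = pp F * pp G := Finset.prod_union hd
  have hcard : ((Finset.range (pp (F ∪ G))).filter
      (· ∈ (natMultiples ((F ∪ G : Finset ℕ) : Set ℕ))ᶜ)).card =
      ((Finset.range (pp F)).filter (· ∈ (natMultiples (F : Set ℕ))ᶜ)).card *
      ((Finset.range (pp G)).filter (· ∈ (natMultiples (G : Set ℕ))ᶜ)).card := by
    rw [hpp, ← Finset.card_product]
    have hm : ∀ (H : Finset ℕ) (x : ℕ), x % pp H ∈ natMultiples (H : Set ℕ) ↔
        x ∈ natMultiples (H : Set ℕ) := by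
      intro H x
      rw [per_mult H (x / pp H), Nat.mod_add_div]
    have hun : ∀ x, x ∈ natMultiples ((F ∪ G : Finset ℕ) : Set ℕ) ↔
        x ∈ natMultiples (F : Set ℕ) ∨ x ∈ natMultiples (G : Set ℕ) := by
      intro x
      simp only [natMultiples, Set.mem_ofPred_eq, Finset.coe_union, Set.mem_union]
      constructor
      · rintro ⟨p, hp | hp, h⟩
        · exact Or.inl ⟨p, hp, h⟩
        · exact Or.inr ⟨p, hp, h⟩
      · rintro (⟨p, hp, h⟩ | ⟨p, hp, h⟩)
        · exact ⟨p, Or.inl hp, h⟩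
        · exact ⟨p, Or.inr hp, h⟩
    apply Finset.card_bij (fun x _ => (x % pp F, x % pp G))
    · intro x hx
      simp only [Finset.mem_filter, Finset.mem_range, Set.mem_compl_iff, hun, not_or] at hx
      simp only [Finset.mem_product, Finset.mem_filter, Finset.mem_range, Set.mem_compl_iff, hm]
      exact ⟨⟨Nat.mod_lt _ (pp_pos hF), hx.2.1⟩, ⟨Nat.mod_lt _ (pp_pos hG), hx.2.2⟩⟩
    · intro x hx y hy hxy
      simp only [Prod.mk.injEq] at hxy
      have := (Nat.modEq_and_modEq_iff_modEq_mul hco).1 hxy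
      simp only [Finset.mem_filter, Finset.mem_range] at hx hy
      exact Nat.ModEq.eq_of_lt_of_lt this hx.1 hy.1
    · rintro ⟨a, b⟩ hab
      simp only [Finset.mem_product, Finset.mem_filter, Finset.mem_range,
        Set.mem_compl_iff] at hab
      obtain ⟨⟨ha, ha'⟩, hb, hb'⟩ := hab
      let z := Nat.chineseRemainder hco a b
      have hz1 : (z : ℕ) % pp F = a := by
        have := z.2.1; rw [Nat.ModEq, Nat.mod_eq_of_lt ha] at this; exact this
      have hz2 : (z : ℕ) % pp G = b := by
        have := z.2.2; rw [Nat.ModEq, Nat.mod_eq_of_lt hb] at this; exact this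
      refine ⟨z, ?_, by rw [hz1, hz2]⟩
      simp only [Finset.mem_filter, Finset.mem_range, Set.mem_compl_iff, hun, not_or]
      refine ⟨Nat.chineseRemainder_lt_mul hco a b (pp_pos hF).ne' (pp_pos hG).ne', ?_, ?_⟩
      · rwa [← hm, hz1]
      · rwa [← hm, hz2]
  unfold ff
  rw [hcard, hpp]
  push_cast
  rw [ENNReal.mul_inv (Or.inr (by simp)) (Or.inl (by simp))]
  ring
lemma ind_nonneg (S : Set ℤ) (k : ℕ) :
    0 ≤ S.indicator (fun m : ℤ => ((m : ℝ))⁻¹) (k : ℤ) := by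
  by_cases h : (k : ℤ) ∈ S
  · rw [Set.indicator_of_mem h]; positivity
  · rw [Set.indicator_of_notMem h]

/-- The exponent attached to `n`. -/
def sn (n : ℕ) : ℝ := 1 + (Real.log n)⁻¹

lemma sn_tendsto : Tendsto sn atTop (𝓝[>] 1) := by
  have hlog : Tendsto (fun n : ℕ => Real.log n) atTop atTop :=
    Real.tendsto_log_atTop.comp tendsto_natCast_atTop_atTop
  rw [tendsto_nhdsWithin_iff]
  constructor
  · have := (tendsto_const_nhds (x := (1 : ℝ))).add (tendsto_inv_atTop_zero.comp hlog)
    have h2 : Tendsto (fun n : ℕ => 1 + (Real.log n)⁻¹) atTop (𝓝 1) := by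
      simpa [Function.comp_def] using this
    exact h2
  · filter_upwards [hlog.eventually_gt_atTop 0] with n hn
    simp only [sn, Set.mem_Ioi]
    have := inv_pos.2 hn
    linarith

lemma logWeight_cmp : ∀ᶠ n in atTop, ∀ (S : Set ℤ) (κ : ℝ), 0 ≤ κ →
    ZZ {k : ℕ | (k : ℤ) ∈ S} (sn n) ≤ ENNReal.ofReal κ * ZZ univ (sn n) →
    logWeight S n ≤ 6 * κ := by
  have hlog : Tendsto (fun n : ℕ => Real.log n) atTop atTop :=
    Real.tendsto_log_atTop.comp tendsto_natCast_atTop_atTop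
  filter_upwards [hlog.eventually_gt_atTop 0, sn_tendsto.eventually zeta_upper] with n hn hz
  intro S κ hκ h
  have hs1 : sn n - 1 = (Real.log n)⁻¹ := by simp [sn]
  rw [hs1, div_inv_eq_mul] at hz
  have he : Real.exp 1 ≤ 3 := by linarith [Real.exp_one_lt_d9]
  have hterm : ∀ k ∈ Finset.Icc 1 n, ENNReal.ofReal
      (S.indicator (fun m : ℤ => ((m : ℝ))⁻¹) (k : ℤ)) ≤
      ENNReal.ofReal 3 * {k : ℕ | (k : ℤ) ∈ S}.indicator (ww (sn n)) k := by
    intro k hk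
    obtain ⟨hk1, hkn⟩ := Finset.mem_Icc.1 hk
    by_cases hkS : (k : ℤ) ∈ S
    · rw [Set.indicator_of_mem hkS, Set.indicator_of_mem (show k ∈ {k : ℕ | (k : ℤ) ∈ S} from hkS)]
      unfold ww
      rw [← ENNReal.ofReal_mul (by norm_num)]
      apply ENNReal.ofReal_le_ofReal
      have hkpos : (0 : ℝ) < k := by exact_mod_cast hk1
      have hsplit : (k : ℝ) ^ (-sn n) = (k : ℝ)⁻¹ * Real.exp (-(Real.log k * (Real.log n)⁻¹)) := by
        rw [Real.rpow_def_of_pos hkpos, ← Real.exp_log (inv_pos.2 hkpos), Real.log_inv,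
          ← Real.exp_add]
        congr 1
        unfold sn
        ring
      rw [hsplit]
      have hle : Real.log k * (Real.log n)⁻¹ ≤ 1 := by
        rw [← div_eq_mul_inv, div_le_one hn]
        exact Real.log_le_log hkpos (by exact_mod_cast hkn)
      have h3 : 1 ≤ 3 * Real.exp (-(Real.log k * (Real.log n)⁻¹)) := by
        have h4 : Real.exp (-1) ≤ Real.exp (-(Real.log k * (Real.log n)⁻¹)) :=
          Real.exp_le_exp.2 (by linarith)
        have h5 : Real.exp 1 * Real.exp (-1) = 1 := by rw [← Real.exp_add]; simp
        nlinarith [Real.exp_pos (-1)]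
      push_cast
      have := inv_pos.2 hkpos
      nlinarith
    · rw [Set.indicator_of_notMem hkS]; simp
  have hnn : ∀ k ∈ Finset.Icc 1 n, 0 ≤ S.indicator (fun m : ℤ => ((m : ℝ))⁻¹) (k : ℤ) := by
    intro k _
    exact ind_nonneg S k
  have hsum : ENNReal.ofReal (∑ k ∈ Finset.Icc 1 n,
      S.indicator (fun m : ℤ => ((m : ℝ))⁻¹) (k : ℤ)) ≤
      ENNReal.ofReal (3 * (κ * (2 * Real.log n))) := by
    rw [ENNReal.ofReal_sum_of_nonneg hnn]
    refine (Finset.sum_le_sum hterm).trans ?_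
    rw [← Finset.mul_sum, ENNReal.ofReal_mul (by norm_num), ENNReal.ofReal_mul hκ]
    gcongr
    refine (ENNReal.sum_le_tsum _).trans ?_
    refine h.trans ?_
    gcongr
  rw [ENNReal.ofReal_le_ofReal_iff (by positivity)] at hsum
  unfold logWeight
  rw [inv_mul_le_iff₀ hn]
  linarith

lemma logWeight_nonneg (S : Set ℤ) (n : ℕ) : 0 ≤ logWeight S n := by
  unfold logWeight
  apply mul_nonneg (inv_nonneg.2 (Real.log_natCast_nonneg n))
  apply Finset.sum_nonneg
  intro k _
  exact ind_nonneg S k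

lemma logWeight_add {S S1 S2 : Set ℤ} (h : ∀ k : ℕ, (k : ℤ) ∈ S → (k : ℤ) ∈ S1 ∨ (k : ℤ) ∈ S2)
    (n : ℕ) : logWeight S n ≤ logWeight S1 n + logWeight S2 n := by
  unfold logWeight
  rw [← mul_add, ← Finset.sum_add_distrib]
  apply mul_le_mul_of_nonneg_left _ (inv_nonneg.2 (Real.log_natCast_nonneg n))
  apply Finset.sum_le_sum
  intro k _
  have h1 : ∀ T : Set ℤ, 0 ≤ T.indicator (fun m : ℤ => ((m : ℝ))⁻¹) (k : ℤ) := by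
    intro T
    exact ind_nonneg T k
  by_cases hk : (k : ℤ) ∈ S
  · rw [Set.indicator_of_mem hk]
    rcases h k hk with h | h
    · rw [Set.indicator_of_mem h]; linarith [h1 S2]
    · rw [Set.indicator_of_mem h]; linarith [h1 S1]
  · rw [Set.indicator_of_notMem hk]; linarith [h1 S1, h1 S2]

lemma logWeight_le_two : ∀ᶠ n in atTop, ∀ S : Set ℤ, logWeight S n ≤ 6 := by
  filter_upwards [logWeight_cmp] with n hn S
  have := hn S 1 zero_le_one (by simpa using ZZ_mono (Set.subset_univ _) _)
  linarith

lemma cobdd (S : Set ℤ) : IsCoboundedUnder (· ≥ ·) atTop (logWeight S) := by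
  apply IsBoundedUnder.isCoboundedUnder_ge
  refine ⟨6, ?_⟩
  rw [eventually_map]
  filter_upwards [logWeight_le_two] with n hn
  exact hn S

lemma bdd (S : Set ℤ) : IsBoundedUnder (· ≥ ·) atTop (logWeight S) :=
  ⟨0, by rw [eventually_map]; exact Eventually.of_forall (logWeight_nonneg S)⟩

lemma mult_coe (C : Set ℕ) : {k : ℕ | (k : ℤ) ∈ multiplesZ C} = natMultiples C := by
  ext k
  simp only [multiplesZ, natMultiples, Set.mem_ofPred_eq, Int.natCast_dvd_natCast]

lemma decomp (A : Finset ℕ) : ∀ b : ℕ, b ≠ 0 → ∃ a ∈ Nat.factoredNumbers A, ∃ c, b = a * c ∧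
    ∀ p : ℕ, p.Prime → p ∣ c → p ∉ A := by
  intro b
  induction b using Nat.strong_induction_on with
  | _ b ih =>
    intro hb
    by_cases h : ∃ p ∈ A, p.Prime ∧ p ∣ b
    · obtain ⟨p, hpA, hp, b', rfl⟩ := h
      have hb' : b' ≠ 0 := by rintro rfl; simp at hb
      obtain ⟨a, ha, c, hc, hcp⟩ := ih b' (by
        have := hp.two_le
        have : 0 < b' := Nat.pos_of_ne_zero hb'
        nlinarith) hb'
      refine ⟨p * a, ?_, c, by rw [hc]; ring, hcp⟩
      rw [Nat.mem_factoredNumbers'] at ha ⊢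
      intro q hq hqd
      rcases (Nat.Prime.dvd_mul hq).1 hqd with h | h
      · rw [(Nat.prime_dvd_prime_iff_eq hq hp).1 h]; exact hpA
      · exact ha q hq h
    · push Not at h
      refine ⟨1, ?_, b, by simp, fun p hp hpb hpA => h p hpA hp hpb⟩
      rw [Nat.mem_factoredNumbers']
      intro q hq hq1
      exact absurd (Nat.dvd_one.1 hq1) hq.one_lt.ne'

lemma sum_factored (A : Finset ℕ) :
    ∑' a : Nat.factoredNumbers A, ((a : ℕ) : ENNReal)⁻¹ ≠ ⊤ := by
  let f : ℕ →* ℝ := ⟨⟨fun n => (n : ℝ)⁻¹, by simp⟩, by intro x y; simp [mul_comm]⟩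
  have h := (EulerProduct.summable_and_hasSum_factoredNumbers_prod_filter_prime_geometric (f := f)
    (by
      intro p hp
      simp only [f, MonoidHom.coe_mk, OneHom.coe_mk, norm_inv, Real.norm_natCast]
      exact inv_lt_one_of_one_lt₀ (by exact_mod_cast hp.one_lt)) A).1
  have h2 := h.tsum_ofReal_ne_top
  convert h2 using 3 with a
  have ha : 0 < (a : ℕ) := Nat.pos_of_ne_zero (Nat.ne_zero_of_mem_factoredNumbers a.2)
  simp only [f, MonoidHom.coe_mk, OneHom.coe_mk, norm_inv, Real.norm_natCast]
  rw [ENNReal.ofReal_inv_of_pos (by exact_mod_cast ha), ENNReal.ofReal_natCast]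

/-- Cofactors. -/
def CC (B : Set ℕ) (A : Finset ℕ) (N a : ℕ) : Set ℕ :=
  {c | 1 < c ∧ (∀ p : ℕ, p.Prime → p ∣ c → N < p ∧ p ∉ A) ∧ a * c ∈ B}

lemma CC_anti (B : Set ℕ) (A : Finset ℕ) (a : ℕ) {N N' : ℕ} (h : N ≤ N') :
    CC B A N' a ⊆ CC B A N a := by
  rintro c ⟨h1, h2, h3⟩
  exact ⟨h1, fun p hp hpc => ⟨by have := (h2 p hp hpc).1; omega, (h2 p hp hpc).2⟩, h3⟩

lemma DD_mono {C C' : Set ℕ} (h : C ⊆ C') : DD C ≤ DD C' := by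
  apply iSup_le
  rintro ⟨F, hF⟩
  exact le_iSup (fun F : {F : Finset ℕ // (F : Set ℕ) ⊆ C'} => dd F) ⟨F, hF.trans h⟩

lemma DD_le_one {C : Set ℕ} (hC : ∀ c ∈ C, 0 < c) : DD C ≤ 1 := by
  apply iSup_le
  rintro ⟨F, hF⟩
  rw [← dd_add_ff (fun f hf => hC f (hF hf))]
  exact le_self_add

lemma step_two (B : Set ℕ) (A : Finset ℕ) (κ : ENNReal) (hκ : 0 < κ)
    (h : ∀ N, κ ≤ ∑' a : Nat.factoredNumbers A, ((a : ℕ) : ENNReal)⁻¹ * DD (CC B A N a)) :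
    ∃ a ∈ Nat.factoredNumbers A, ∃ η > 0, ∀ N, η ≤ DD (CC B A N a) := by
  by_contra hcon
  push Not at hcon
  have hlim : ∀ a : Nat.factoredNumbers A,
      Tendsto (fun N => ((a : ℕ) : ENNReal)⁻¹ * DD (CC B A N a)) atTop (𝓝 0) := by
    intro a
    have ha : (a : ℕ) ≠ 0 := Nat.ne_zero_of_mem_factoredNumbers a.2
    have h1 : Tendsto (fun N => DD (CC B A N a)) atTop (𝓝 0) := by
      rw [ENNReal.tendsto_nhds_zero]
      intro η hη
      obtain ⟨N, hN⟩ := hcon a a.2 η hη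
      filter_upwards [eventually_ge_atTop N] with M hM
      exact (DD_mono (CC_anti B A a hM)).trans hN.le
    have := ENNReal.Tendsto.const_mul (a := ((a : ℕ) : ENNReal)⁻¹) h1
      (Or.inr (by simpa using ha))
    simpa using this
  have htend : Tendsto (fun N => ∑' a : Nat.factoredNumbers A,
      ((a : ℕ) : ENNReal)⁻¹ * DD (CC B A N a)) atTop (𝓝 0) := by
    have := tendsto_lintegral_of_dominated_convergence
      (μ := (Measure.count : Measure (Nat.factoredNumbers A)))
      (F := fun N (a : Nat.factoredNumbers A) => ((a : ℕ) : ENNReal)⁻¹ * DD (CC B A N a))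
      (f := fun _ => 0) (fun a : Nat.factoredNumbers A => ((a : ℕ) : ENNReal)⁻¹)
      (fun n => measurable_of_countable _)
      (fun n => Eventually.of_forall fun a => by
        calc _ ≤ ((a : ℕ) : ENNReal)⁻¹ * 1 :=
              mul_le_mul_right (DD_le_one fun c hc => by have := hc.1; omega) _
          _ = _ := mul_one _)
      (by rw [lintegral_count]; exact sum_factored A)
      (Eventually.of_forall hlim)
    simpa [lintegral_count] using this
  have := ge_of_tendsto' htend h
  exact absurd this (not_le.2 hκ)

lemma step_three (B : Set ℕ) (A : Finset ℕ) (a : ℕ) (η : ENNReal) (hη : 0 < η)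
    (h : ∀ N, η ≤ DD (CC B A N a)) (m : ℕ) : ∀ N, ∃ F : Finset ℕ, (F : Set ℕ) ⊆ CC B A N a ∧
      ff F ≤ (1 - η / 2) ^ m := by
  have hη1 : η ≤ 1 := (h 0).trans (DD_le_one fun c hc => by have := hc.1; omega)
  have hηtop : η ≠ ⊤ := ne_top_of_le_ne_top ENNReal.one_ne_top hη1
  have hpos : ∀ {N : ℕ} {F : Finset ℕ}, (F : Set ℕ) ⊆ CC B A N a → ∀ f ∈ F, 0 < f := by
    intro N F hF f hf
    have := (hF hf).1
    omega
  induction m with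
  | zero =>
    intro N
    refine ⟨∅, by simp, ?_⟩
    simp only [pow_zero]
    rw [← dd_add_ff (F := ∅) (by simp)]
    exact le_add_self
  | succ m ih =>
    intro N
    obtain ⟨F, hF, hFm⟩ := ih N
    have hlt : η / 2 < DD (CC B A (max N (pp F)) a) :=
      (ENNReal.half_lt_self hη.ne' hηtop).trans_le (h _)
    obtain ⟨⟨G, hG⟩, hGd⟩ := lt_iSup_iff.1 hlt
    simp only at hGd
    have hFp := hpos hF
    have hGp := hpos hG
    have hco : Nat.Coprime (pp F) (pp G) := by
      apply Nat.coprime_of_dvd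
      intro p hp hpF hpG
      have h1 : p ≤ pp F := Nat.le_of_dvd (pp_pos hFp) hpF
      obtain ⟨g, hg, hpg⟩ := (hp.prime.dvd_finsetProd_iff _).1 hpG
      have h2 := ((hG hg).2.1 p hp hpg).1
      have := le_max_right N (pp F)
      omega
    have hdis : Disjoint F G := by
      rw [Finset.disjoint_left]
      intro f hf hg
      have h1 := Nat.dvd_gcd (Finset.dvd_prod_of_mem (fun f : ℕ => f) hf)
        (Finset.dvd_prod_of_mem (fun f : ℕ => f) hg)
      have h2 : Nat.gcd (∏ i ∈ F, i) (∏ i ∈ G, i) = 1 := hco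
      rw [h2] at h1
      have := Nat.dvd_one.1 h1
      have := (hF hf).1
      omega
    refine ⟨F ∪ G, ?_, ?_⟩
    · rw [Finset.coe_union]
      exact Set.union_subset hF (hG.trans (CC_anti B A a (le_max_left _ _)))
    · rw [ff_union hFp hGp hdis hco, pow_succ]
      have : ff G ≤ 1 - η / 2 := by
        apply ENNReal.le_sub_of_add_le_left (ENNReal.div_ne_top hηtop (by norm_num))
        rw [← dd_add_ff hGp]
        gcongr
      gcongr

lemma step_one (B : Set ℕ) (hB0 : 0 ∉ B) (A : Finset ℕ) (ε : ℝ) (hε : 0 < ε) (N : ℕ)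
    (P : Finset ℕ) (hP : P = (Finset.range (N + 1)).filter (fun p => p.Prime ∧ p ∉ A))
    (h : ε ≤ logDensLow (multiplesZ
        (B \ ({b ∈ B | ∀ p : ℕ, p.Prime → p ∣ b → p ∈ A} ∪ natMultiples ↑P)))) :
    ENNReal.ofReal (ε / 12) ≤
      ∑' a : Nat.factoredNumbers A, ((a : ℕ) : ENNReal)⁻¹ * DD (CC B A N a) := by
  by_contra hcon
  rw [not_le] at hcon
  set X := B \ ({b ∈ B | ∀ p : ℕ, p.Prime → p ∣ b → p ∈ A} ∪ natMultiples ↑P) with hX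
  have hsub : natMultiples X ⊆
      ⋃ a : Nat.factoredNumbers A, Set.image (fun j => (a : ℕ) * j) (natMultiples (CC B A N a)) := by
    rintro k ⟨b, ⟨hbB, hbn⟩, m, rfl⟩
    have hb0 : b ≠ 0 := by rintro rfl; exact hB0 hbB
    obtain ⟨a, ha, c, rfl, hc⟩ := decomp A b hb0
    refine Set.mem_iUnion.2 ⟨⟨a, ha⟩, c * m, ⟨c, ⟨?_, ?_, hbB⟩, Dvd.intro _ rfl⟩, by
      simp only; ring⟩
    · have hc0 : c ≠ 0 := by rintro rfl; simp at hb0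
      have hc1 : c ≠ 1 := by
        rintro rfl
        apply hbn
        left
        refine ⟨hbB, ?_⟩
        rw [mul_one]
        exact Nat.mem_factoredNumbers'.1 ha
      omega
    · intro p hp hpc
      refine ⟨?_, hc p hp hpc⟩
      by_contra hle
      apply hbn
      right
      refine ⟨p, ?_, hpc.mul_left a⟩
      rw [hP]
      simp only [Finset.coe_filter, Finset.mem_range, Set.mem_ofPred_eq]
      exact ⟨by omega, hp, hc p hp hpc⟩
  have hZ : ∀ s : ℝ, 1 < s → ZZ (natMultiples X) s ≤ ENNReal.ofReal (ε / 12) * ZZ univ s := by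
    intro s hs
    refine (ZZ_mono hsub s).trans ((ZZ_iUnion _ s).trans ?_)
    refine le_trans ?_ (mul_le_mul_left hcon.le _)
    rw [← ENNReal.tsum_mul_right]
    apply ENNReal.tsum_le_tsum
    intro a
    rw [ZZ_scale a (Nat.pos_of_ne_zero (Nat.ne_zero_of_mem_factoredNumbers a.2)), mul_assoc]
    gcongr
    · exact ww_le_inv hs a
    · exact ZZ_le_DD (fun c hc => by have := hc.1; omega) hs
  have hlt : ε / 2 < liminf (logWeight (multiplesZ X)) atTop :=
    lt_of_lt_of_le (by linarith) h
  have hev := eventually_lt_of_lt_liminf hlt (bdd _)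
  have h1 : ∀ᶠ n in atTop, 1 < sn n := sn_tendsto.eventually self_mem_nhdsWithin
  obtain ⟨n, hn, hn1, hn2⟩ := (hev.and (h1.and logWeight_cmp)).exists
  have := hn2 (multiplesZ X) (ε / 12) (by positivity) (by
    rw [mult_coe]; exact hZ _ hn1)
  linarith

lemma step_four (B : Set ℕ) (htaut : IsTaut B) (A : Finset ℕ) (a : ℕ) (ha : 0 < a)
    (h : ∀ δ : ENNReal, 0 < δ → ∀ N, ∃ F : Finset ℕ, (F : Set ℕ) ⊆ CC B A N a ∧ ff F ≤ δ)
    (c₀ : ℕ) (hc₀ : c₀ ∈ CC B A 0 a) : False := by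
  have ht := htaut (a * c₀) hc₀.2.2
  set B' := B \ {a * c₀} with hB'
  obtain ⟨x, hx1, hx2⟩ := exists_between ht
  obtain ⟨y, hy1, hy2⟩ := exists_between hx2
  have hκ : 0 < (y - x) / 12 := by linarith
  obtain ⟨F, hF, hFf⟩ := h (ENNReal.ofReal ((y - x) / 12 / 2)) (by
    rw [ENNReal.ofReal_pos]; linarith) c₀
  have hFp : ∀ f ∈ F, 0 < f := fun f hf => by have := (hF hf).1; omega
  let T : Set ℤ := {z | ∃ j : ℕ, z = a * j ∧ j ∈ (natMultiples (F : Set ℕ))ᶜ}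
  have hcover : ∀ k : ℕ, (k : ℤ) ∈ multiplesZ B →
      (k : ℤ) ∈ multiplesZ B' ∨ (k : ℤ) ∈ T := by
    rintro k ⟨b, hb, hbk⟩
    by_cases hbb : b = a * c₀
    · subst hbb
      obtain ⟨m, rfl⟩ := Int.natCast_dvd_natCast.1 hbk
      by_cases hj : c₀ * m ∈ natMultiples (F : Set ℕ)
      · left
        obtain ⟨f, hf, hfj⟩ := hj
        refine ⟨a * f, ⟨(hF hf).2.2, ?_⟩, ?_⟩
        · intro heq
          have heq : a * f = a * c₀ := heq
          have hfc : f = c₀ := Nat.eq_of_mul_eq_mul_left ha heq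
          have hf1 := (hF hf).1
          obtain ⟨p, hp, hpf⟩ := Nat.exists_prime_and_dvd (show f ≠ 1 by omega)
          have h1 := ((hF hf).2.1 p hp hpf).1
          have := Nat.le_of_dvd (by omega) hpf
          omega
        · rw [Int.natCast_dvd_natCast, mul_assoc]
          exact Nat.mul_dvd_mul_left a hfj
      · right
        exact ⟨c₀ * m, by push_cast; ring, hj⟩
    · left
      exact ⟨b, ⟨hb, hbb⟩, hbk⟩
  have hZT : ∀ᶠ s in 𝓝[>] (1 : ℝ),
      ZZ {k : ℕ | (k : ℤ) ∈ T} s ≤ ENNReal.ofReal ((y - x) / 12) * ZZ univ s := by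
    filter_upwards [zeta_top (pp F), self_mem_nhdsWithin] with s hs hs1
    have hs1' : 1 < s := hs1
    rw [ENNReal.ofReal_natCast] at hs
    have himg : {k : ℕ | (k : ℤ) ∈ T} = Set.image (fun j => a * j) (natMultiples (F : Set ℕ))ᶜ := by
      ext k
      constructor
      · rintro ⟨j, hj, hj'⟩
        exact ⟨j, hj', by simp only; exact_mod_cast hj.symm⟩
      · rintro ⟨j, hj, rfl⟩
        exact ⟨j, by push_cast; ring, hj⟩
    rw [himg, ZZ_scale a ha]
    have hwa : ww s a ≤ 1 := by
      rw [← ww_one s]; exact ww_anti hs1' Nat.one_pos ha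
    have hp0 : (pp F : ENNReal) ≠ 0 := by exact_mod_cast (pp_pos hFp).ne'
    calc ww s a * ZZ (natMultiples (F : Set ℕ))ᶜ s ≤ 1 * ZZ (natMultiples (F : Set ℕ))ᶜ s := by
          gcongr
      _ = ZZ (natMultiples (F : Set ℕ))ᶜ s := one_mul _
      _ ≤ _ := periodic_bound (natMultiples (F : Set ℕ))ᶜ (pp F) (pp_pos hFp)
          (fun k r => not_congr (per_mult F k r)) hs1'
      _ = ff F * (pp F + ZZ univ s) := by
          unfold ff
          rw [mul_assoc, mul_add ((pp F : ENNReal)⁻¹), ENNReal.inv_mul_cancel hp0 (by simp)]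
          congr!
      _ ≤ ENNReal.ofReal ((y - x) / 12 / 2) * (ZZ univ s + ZZ univ s) := by gcongr
      _ = ENNReal.ofReal ((y - x) / 12) * ZZ univ s := by
          rw [← two_mul, ← mul_assoc]
          congr 1
          rw [show (2 : ENNReal) = ENNReal.ofReal 2 by simp, ← ENNReal.ofReal_mul (by linarith)]
          congr 1
          ring
  have hfreq : ∃ᶠ n in atTop, logWeight (multiplesZ B') n < x :=
    frequently_lt_of_liminf_lt (cobdd _) hx1
  have hev : ∀ᶠ n in atTop, y < logWeight (multiplesZ B) n :=
    eventually_lt_of_lt_liminf hy2 (bdd _)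
  obtain ⟨n, hn1, hn2, hn3, hn4⟩ := (hfreq.and_eventually
    (hev.and (logWeight_cmp.and (sn_tendsto.eventually hZT)))).exists
  have h1 := hn3 T _ hκ.le hn4
  have h2 := logWeight_add hcover n
  linarith

/-- For a taut set `B`, a finite set `A` of primes and `ε > 0` there is a finite set `P`
of primes, disjoint from `A`, with `δ(M_{B ∖ (B_A ∪ M_P)}) < ε`. -/
theorem taut_prime_exhaust (B : Set ℕ) (hB0 : 0 ∉ B) (hprim : Primitive B) (htaut : IsTaut B)
    (A : Finset ℕ) (hA : ∀ p ∈ A, p.Prime) (ε : ℝ) (hε : 0 < ε) :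
    ∃ P : Finset ℕ, (∀ p ∈ P, p.Prime) ∧ (∀ p ∈ P, p ∉ A) ∧
      logDensLow (multiplesZ
        (B \ ({b ∈ B | ∀ p : ℕ, p.Prime → p ∣ b → p ∈ A} ∪ natMultiples ↑P))) < ε := by
  by_contra hcon
  push Not at hcon
  have h1 : ∀ N, ENNReal.ofReal (ε / 12) ≤
      ∑' a : Nat.factoredNumbers A, ((a : ℕ) : ENNReal)⁻¹ * DD (CC B A N a) := by
    intro N
    apply step_one B hB0 A ε hε N _ rfl
    apply hcon
    · intro p hp
      exact (Finset.mem_filter.1 hp).2.1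
    · intro p hp
      exact (Finset.mem_filter.1 hp).2.2
  obtain ⟨a, ha, η, hη, hD⟩ := step_two B A _ (by rw [ENNReal.ofReal_pos]; linarith) h1
  have hη1 : η ≤ 1 := (hD 0).trans (DD_le_one fun c hc => by have := hc.1; omega)
  have hbase : 1 - η / 2 < 1 :=
    ENNReal.sub_lt_self ENNReal.one_ne_top one_ne_zero
      (ENNReal.div_pos hη.ne' (by norm_num)).ne'
  have h3 : ∀ δ : ENNReal, 0 < δ → ∀ N, ∃ F : Finset ℕ,
      (F : Set ℕ) ⊆ CC B A N a ∧ ff F ≤ δ := by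
    intro δ hδ N
    have hlim := ENNReal.tendsto_pow_atTop_nhds_zero_of_lt_one hbase
    obtain ⟨m, hm⟩ := (ENNReal.tendsto_nhds_zero.1 hlim δ hδ).exists
    obtain ⟨F, hF, hFm⟩ := step_three B A a η hη hD m N
    exact ⟨F, hF, hFm.trans hm⟩
  have hne : (CC B A 0 a).Nonempty := by
    obtain ⟨F, hF, hFf⟩ := h3 (1 / 2) (by simp) 0
    by_contra hemp
    rw [Set.not_nonempty_iff_eq_empty] at hemp
    rw [hemp] at hF
    have hFe : F = ∅ := by
      rw [← Finset.coe_eq_empty]; exact Set.subset_empty_iff.1 hF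
    subst hFe
    simp [ff, pp, natMultiples] at hFf
  obtain ⟨c₀, hc₀⟩ := hne
  exact step_four B htaut A a (Nat.pos_of_ne_zero (Nat.ne_zero_of_mem_factoredNumbers ha)) h3 c₀ hc₀
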